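/- Suppose the flow graph G is reducible. Let T be a rooted tree on the vertex set of G that has the parent property, and let G' be the derived graph of G with respect to T. If for every vertex v ≠ s, either (t(v), v) ∈ A or at least two distinct arcs of G' enter v, then T has the sibling property (and hence T is the dominator tree of G). -/

import Mathlib

variable {V : Type*}

/-- `IsWalk A u v p`: `p` is a path from `u` to `v` in the digraph with arc
relation `A`, listing all of its vertices in order. -/
def IsWalk (A : V → V → Prop) (u v : V) (p : List V) : Prop :=
  p.Chain' A ∧ p.head? = some u ∧ p.getLast? = some v

/-- A flow graph: a directed graph with arc relation `A` and start vertex `s`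
such that every vertex is reachable from `s` and no arc enters `s`. -/
structure FlowGraph (V : Type*) where
  A : V → V → Prop
  s : V
  reach : ∀ v : V, ∃ p : List V, IsWalk A s v p
  no_enter : ∀ v : V, ¬ A v s

/-- `DomOn A s v w`: `v` lies on every path from `s` to `w` in the digraph with
arc relation `A`. -/
def DomOn (A : V → V → Prop) (s v w : V) : Prop :=
  ∀ p : List V, IsWalk A s w p → v ∈ p

/-- `v` dominates `w` in the flow graph `G`. -/
def FlowGraph.Dom (G : FlowGraph V) (v w : V) : Prop :=
  DomOn G.A G.s v w

/-- A rooted tree on vertex set `V`, given by a parent function: the root is a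
fixed point of the parent function, and iterating the parent function from any
vertex eventually reaches the root. -/
structure ParentTree (V : Type*) where
  parent : V → V
  root : V
  parent_root : parent root = root
  reaches_root : ∀ v : V, ∃ n : ℕ, parent^[n] v = root

/-- `T.Anc x y`: `x` is an ancestor of `y` in the rooted tree `T` (every vertex
is an ancestor of itself). -/
def ParentTree.Anc (T : ParentTree V) (x y : V) : Prop :=
  ∃ n : ℕ, T.parent^[n] y = x

/-- `T` has the parent property with respect to `G`: for every arc `(v, w)`,
the parent of `w` is an ancestor of `v` in `T`. -/
def ParentProperty (G : FlowGraph V) (T : ParentTree V) : Prop :=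
  ∀ v w : V, G.A v w → T.Anc (T.parent w) v

/-- The sibling property with respect to an arbitrary arc relation `A` with
start vertex `s`: no non-root vertex dominates a distinct vertex with the same
parent. -/
def SiblingPropertyOn (A : V → V → Prop) (s : V) (T : ParentTree V) : Prop :=
  ∀ v w : V, v ≠ T.root → w ≠ T.root → v ≠ w → T.parent v = T.parent w →
    ¬ DomOn A s v w

/-- `T` has the sibling property with respect to the flow graph `G`. -/
def SiblingProperty (G : FlowGraph V) (T : ParentTree V) : Prop :=
  SiblingPropertyOn G.A G.s T

/-- `T` is the dominator tree of the digraph with arc relation `A` and start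
vertex `s`: `T` is rooted at `s`, and the parent of every vertex `v ≠ s` is its
immediate dominator, i.e. a strict dominator of `v` that is dominated by every
strict dominator of `v`. -/
def IsDomTreeOn (A : V → V → Prop) (s : V) (T : ParentTree V) : Prop :=
  T.root = s ∧ ∀ v : V, v ≠ s →
    DomOn A s (T.parent v) v ∧ T.parent v ≠ v ∧
    ∀ u : V, DomOn A s u v → u ≠ v → DomOn A s u (T.parent v)

/-- `T` is the dominator tree of the flow graph `G`. -/
def IsDomTree (G : FlowGraph V) (T : ParentTree V) : Prop :=
  IsDomTreeOn G.A G.s T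

/-- `ord` is (the numbering of) a preorder of the rooted tree `T`: an injective
numbering of the vertices such that for every vertex `v` the descendants of `v`
are ordered consecutively, with `v` first. -/
def IsTreePreorder (T : ParentTree V) (ord : V → ℕ) : Prop :=
  Function.Injective ord ∧
  (∀ v x : V, T.Anc v x → ord v ≤ ord x) ∧
  (∀ v x y z : V, T.Anc v x → T.Anc v z → ord x ≤ ord y → ord y ≤ ord z →
    T.Anc v y)

/-- A preorder `ord` of `T` is low-high on the digraph with arc relation `A`
and start vertex `s`: for every `v ≠ s`, either `(t(v), v)` is an arc, or there
are arcs `(u, v)` and `(w, v)` with `u < v < w` in the order and `w` not a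
descendant of `v` in `T`. -/
def LowHighOn (A : V → V → Prop) (s : V) (T : ParentTree V) (ord : V → ℕ) :
    Prop :=
  IsTreePreorder T ord ∧
  ∀ v : V, v ≠ s → (A (T.parent v) v ∨
    ∃ u w : V, A u v ∧ A w v ∧ ord u < ord v ∧ ord v < ord w ∧ ¬ T.Anc v w)

/-- A low-high order of `T` on the flow graph `G`. -/
def LowHigh (G : FlowGraph V) (T : ParentTree V) (ord : V → ℕ) : Prop :=
  LowHighOn G.A G.s T ord

/-- `B` is (the arc relation of) a spanning tree of `G` rooted at `s`: a
subgraph of `G` in which no arc enters `s`, every vertex other than `s` has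
exactly one entering arc, and every vertex is reachable from `s`. -/
def IsSpanningTree (G : FlowGraph V) (B : V → V → Prop) : Prop :=
  (∀ u v : V, B u v → G.A u v) ∧
  (∀ v : V, ¬ B v G.s) ∧
  (∀ v : V, v ≠ G.s → ∃! u : V, B u v) ∧
  (∀ v : V, ∃ p : List V, IsWalk B G.s v p)

/-- Spanning trees `B` and `R` of `G` rooted at `s` are independent: for every
vertex `v`, the paths from `s` to `v` in `B` and in `R` have in common only
dominators of `v`. -/
def Independent (G : FlowGraph V) (B R : V → V → Prop) : Prop :=
  ∀ v : V, ∀ p q : List V, IsWalk B G.s v p → IsWalk R G.s v q →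
    ∀ x : V, x ∈ p → x ∈ q → G.Dom x v

/-- Spanning trees `B` and `R` of `G` rooted at `s` are strongly independent:
for every pair of vertices `v`, `w`, either the path from `s` to `v` in `B` and
the path from `s` to `w` in `R` have in common only common dominators of `v`
and `w`, or the same holds with the roles of `B` and `R` exchanged. -/
def StronglyIndependent (G : FlowGraph V) (B R : V → V → Prop) : Prop :=
  ∀ v w : V,
    (∀ p q : List V, IsWalk B G.s v p → IsWalk R G.s w q →
      ∀ x : V, x ∈ p → x ∈ q → G.Dom x v ∧ G.Dom x w) ∨
    (∀ p q : List V, IsWalk R G.s v p → IsWalk B G.s w q →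
      ∀ x : V, x ∈ p → x ∈ q → G.Dom x v ∧ G.Dom x w)

/-- `IsDerivedArcOf G T v b a`: `(a, b)` is the derived arc of the arc `(v, b)`
of `G` with respect to `T`: `b` is not an ancestor of `v` in `T`, and `a = v`
if `v` is the parent of `b`, while otherwise `a` is the sibling of `b` in `T`
that is an ancestor of `v`. -/
def IsDerivedArcOf (G : FlowGraph V) (T : ParentTree V) (v b a : V) : Prop :=
  G.A v b ∧ ¬ T.Anc b v ∧
    ((v = T.parent b ∧ a = v) ∨
     (v ≠ T.parent b ∧ a ≠ T.root ∧ T.parent a = T.parent b ∧ T.Anc a v))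

/-- The arc relation of the derived graph of `G` with respect to `T`. -/
def DerivedArc (G : FlowGraph V) (T : ParentTree V) (a b : V) : Prop :=
  ∃ v : V, IsDerivedArcOf G T v b a

/-- `S` is the vertex set of a strongly connected subgraph of the digraph with
arc relation `A`. -/
def StronglyConnectedSet (A : V → V → Prop) (S : Set V) : Prop :=
  S.Nonempty ∧ ∀ u ∈ S, ∀ v ∈ S, ∃ p : List V,
    IsWalk A u v p ∧ ∀ x ∈ p, x ∈ S

/-- `G` is reducible: every strongly connected subgraph has a single entry
vertex, i.e. a vertex of the subgraph contained in every path from `s` to a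
vertex of the subgraph. -/
def Reducible (G : FlowGraph V) : Prop :=
  ∀ S : Set V, StronglyConnectedSet G.A S →
    ∃ v ∈ S, ∀ u ∈ S, ∀ p : List V, IsWalk G.A G.s u p → v ∈ p

/-- A digraph is acyclic if it has no cycle (a path from a vertex to itself
with at least one arc). -/
def Acyclic (A : V → V → Prop) : Prop :=
  ¬ ∃ (v : V) (p : List V), IsWalk A v v p ∧ 2 ≤ p.length

/-- `IsHighWalk A ν u v p`: `p` is a high path from `u` to `v`: a path all of
whose vertices other than `u` and `v` are greater (in the numbering `ν`) than
both `u` and `v`. -/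
def IsHighWalk (A : V → V → Prop) (ν : V → ℕ) (u v : V) (p : List V) : Prop :=
  IsWalk A u v p ∧ ∀ x ∈ p, x ≠ u → x ≠ v → ν u < ν x ∧ ν v < ν x

/-!
Suppose a vertex `v` dominates some of its siblings in `T`, and take `v` maximal (with dominated
vertices above their dominators) among the children of its parent with this property. Let `D` be
the set of siblings dominated by `v`. For `w ∈ D`, the parent of `w` has no arc to `w`, as `v`
does not dominate it; so two derived arcs enter `w`, one of them from a vertex other than `v`,
which `v` dominates as well. Hence every `w ∈ D` has a derived arc entering it from `D`, and since
`D` is finite this forces a cycle of derived arcs within `D`. It comes from a closed walk of `G`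
through descendants of `D`. By reducibility the strongly connected component of this walk among
those descendants has an entry `e`; the ancestor `d ∈ D` of `e` dominates `e`, hence dominates
every vertex of `D` on the cycle, at least one of which is not `d`. Thus `d` dominates a sibling
and is strictly dominated by `v`, contradicting the choice of `v`.

Given the sibling property, dominance is ancestry: if some vertex dominated `w` without being an
ancestor of `w`, take such a vertex `v` closest to the root. Its parent dominates `w` too, so it is
a proper ancestor of `w`, and `v` dominates its child towards `w`, which is a sibling of `v`.
-/

section Reachability

variable {A : V → V → Prop} {S S' : Set V} {s u v w x : V}

/-- `ReachesIn A S u v`: there is a walk from `u` to `v` along arcs of `A` all of whose vertices,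
including `u` and `v`, lie in `S`. This is the inductive counterpart of `IsWalk`, which makes
inductions along walks convenient. -/
inductive ReachesIn (A : V → V → Prop) (S : Set V) (u : V) : V → Prop
  | refl : u ∈ S → ReachesIn A S u u
  | tail {v w : V} : ReachesIn A S u v → A v w → w ∈ S → ReachesIn A S u w

namespace ReachesIn

theorem source_mem (h : ReachesIn A S u v) : u ∈ S := by
  induction h with
  | refl hu => exact hu
  | tail _ _ _ ih => exact ih

theorem target_mem (h : ReachesIn A S u v) : v ∈ S := by
  cases h <;> assumption

theorem mono (hS : S ⊆ S') (h : ReachesIn A S u v) : ReachesIn A S' u v := by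
  induction h with
  | refl hu => exact .refl (hS hu)
  | tail _ hA hw ih => exact .tail ih hA (hS hw)

theorem trans (huv : ReachesIn A S u v) (hvw : ReachesIn A S v w) : ReachesIn A S u w := by
  induction hvw with
  | refl _ => exact huv
  | tail _ hA hw ih => exact .tail ih hA hw

theorem exists_isWalk (h : ReachesIn A S u v) : ∃ p, IsWalk A u v p ∧ ∀ x ∈ p, x ∈ S := by
  induction h with
  | refl hu => exact ⟨[u], ⟨List.isChain_singleton u, rfl, rfl⟩, by simpa using hu⟩
  | @tail v w _ hA hw ih =>
    obtain ⟨p, ⟨hchain, hhead, hlast⟩, hp⟩ := ih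
    refine ⟨p ++ [w], ⟨hchain.append (List.isChain_singleton w) ?_, by simp [hhead], by simp⟩, ?_⟩
    · simpa [hlast] using hA
    · simpa [or_imp, forall_and] using ⟨hp, hw⟩

theorem of_isWalk {p : List V} (hp : IsWalk A u v p) (hS : ∀ x ∈ p, x ∈ S) :
    ReachesIn A S u v := by
  induction p generalizing u with
  | nil => simp [IsWalk] at hp
  | cons a p ih =>
    obtain ⟨hchain, hhead, hlast⟩ := hp
    obtain rfl : a = u := by simpa using hhead
    have ha : ReachesIn A S a a := .refl (hS a List.mem_cons_self)
    cases p with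
    | nil =>
      obtain rfl : a = v := by simpa using hlast
      exact ha
    | cons b p =>
      obtain ⟨hab, hchain⟩ := List.isChain_cons_cons.1 hchain
      have hb : ReachesIn A S b v :=
        ih ⟨hchain, rfl, by simpa using hlast⟩ fun x hx => hS x (List.mem_cons_of_mem a hx)
      exact (ha.tail hab hb.source_mem).trans hb

theorem avoids_or_exists_first_hit (h : ReachesIn A S u v) (W : Set V) :
    ReachesIn A (S \ W) u v ∨ ∃ w ∈ W, ReachesIn A (S \ (W \ {w})) u w := by
  induction h with
  | refl hu =>
    by_cases hW : u ∈ W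
    · exact .inr ⟨u, hW, .refl ⟨hu, by simp⟩⟩
    · exact .inl (.refl ⟨hu, hW⟩)
  | @tail v w _ hA hw ih =>
    refine ih.elim (fun hv => ?_) .inr
    by_cases hW : w ∈ W
    · exact .inr ⟨w, hW, .tail (hv.mono (Set.sdiff_subset_sdiff_right Set.sdiff_subset)) hA
        ⟨hw, by simp⟩⟩
    · exact .inl (hv.tail hA ⟨hw, hW⟩)

end ReachesIn

theorem stronglyConnectedSet_setOf_reachesIn (hu : u ∈ S) :
    StronglyConnectedSet A {x | ReachesIn A S u x ∧ ReachesIn A S x u} := by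
  set C := {x | ReachesIn A S u x ∧ ReachesIn A S x u}
  have reaches_in_component {x y : V} (hux : ReachesIn A S u x) (hxy : ReachesIn A S x y)
      (hyu : ReachesIn A S y u) : ReachesIn A C x y := by
    induction hxy with
    | refl _ => exact .refl ⟨hux, hyu⟩
    | @tail y z hxy hA hz ih =>
      have hyz : ReachesIn A S y z := .tail (.refl hxy.target_mem) hA hz
      exact .tail (ih (hyz.trans hyu)) hA ⟨hux.trans (hxy.trans hyz), hyu⟩
  exact ⟨⟨u, .refl hu, .refl hu⟩, fun x hx y hy =>
    (reaches_in_component hx.1 (hx.2.trans hy.1) hy.2).exists_isWalk⟩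

theorem domOn_iff_not_reachesIn_compl : DomOn A s v w ↔ ¬ ReachesIn A {v}ᶜ s w := by
  constructor
  · intro h hr
    obtain ⟨p, hp, hpv⟩ := hr.exists_isWalk
    exact hpv v (h p hp) rfl
  · intro h p hp
    by_contra hv
    exact h (.of_isWalk hp fun x hx hxv => hv (Set.mem_singleton_iff.1 hxv ▸ hx))

theorem DomOn.trans (hvw : DomOn A s v w) (hwx : DomOn A s w x) : DomOn A s v x := by
  rw [domOn_iff_not_reachesIn_compl] at *
  intro hx
  rcases hx.avoids_or_exists_first_hit {w} with hx | ⟨_, rfl, hw⟩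
  · exact hwx (hx.mono fun _ hy => hy.2)
  · exact hvw (hw.mono Set.sdiff_subset)

theorem DomOn.antisymm (hv : ReachesIn A Set.univ s v) (hvw : DomOn A s v w)
    (hwv : DomOn A s w v) : v = w := by
  rw [domOn_iff_not_reachesIn_compl] at *
  by_contra hne
  rcases hv.avoids_or_exists_first_hit {v, w} with hv | ⟨_, rfl | rfl, hz⟩
  · exact hv.target_mem.2 (by simp)
  · exact hwv (hz.mono fun y hy hyw => hy.2 (by simp_all [eq_comm]))
  · exact hvw (hz.mono fun y hy hyv => hy.2 (by simp_all))

theorem DomOn.of_arc (hvw : DomOn A s v w) (hne : w ≠ v) (hA : A u w) : DomOn A s v u := by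
  rw [domOn_iff_not_reachesIn_compl] at *
  exact fun hu => hvw (hu.tail hA hne)

end Reachability

namespace FlowGraph

variable {G : FlowGraph V} {v w : V}

theorem reachesIn_univ (G : FlowGraph V) (v : V) : ReachesIn G.A Set.univ G.s v := by
  obtain ⟨p, hp⟩ := G.reach v
  exact .of_isWalk hp fun _ _ => Set.mem_univ _

theorem Dom.antisymm (hvw : G.Dom v w) (hwv : G.Dom w v) : v = w :=
  DomOn.antisymm (G.reachesIn_univ v) hvw hwv

end FlowGraph

theorem Reducible.exists_common_dominator {G : FlowGraph V} {S : Set V} {v w : V}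
    (hred : Reducible G) (hvw : ReachesIn G.A S v w) (hwv : ReachesIn G.A S w v) :
    ∃ e ∈ S, G.Dom e v ∧ G.Dom e w := by
  have hv : ReachesIn G.A S v v := .refl hvw.source_mem
  obtain ⟨e, he, hdom⟩ := hred _ (stronglyConnectedSet_setOf_reachesIn hvw.source_mem)
  exact ⟨e, he.1.target_mem, hdom v ⟨hv, hv⟩, hdom w ⟨hvw, hwv⟩⟩

namespace ParentTree

variable {T : ParentTree V} {x y z : V}

theorem induction_on {motive : V → Prop} (T : ParentTree V) (root : motive T.root)
    (child : ∀ x, x ≠ T.root → motive (T.parent x) → motive x) (x : V) : motive x := by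
  obtain ⟨n, hn⟩ := T.reaches_root x
  induction n generalizing x with
  | zero =>
    obtain rfl : x = T.root := hn
    exact root
  | succ n ih =>
    by_cases hx : x = T.root
    · exact hx ▸ root
    · exact child x hx (ih (T.parent x) hn)

namespace Anc

theorem refl (T : ParentTree V) (x : V) : T.Anc x x := ⟨0, rfl⟩

theorem parent (T : ParentTree V) (x : V) : T.Anc (T.parent x) x := ⟨1, rfl⟩

theorem trans (hxy : T.Anc x y) (hyz : T.Anc y z) : T.Anc x z := by
  obtain ⟨m, rfl⟩ := hxy
  obtain ⟨n, rfl⟩ := hyz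
  exact ⟨m + n, Function.iterate_add_apply _ m n z⟩

theorem eq_or_parent (h : T.Anc x y) : x = y ∨ T.Anc x (T.parent y) := by
  obtain ⟨_ | n, rfl⟩ := h
  · exact .inl rfl
  · exact .inr ⟨n, rfl⟩

theorem eq_root (h : T.Anc x T.root) : x = T.root := by
  obtain ⟨n, rfl⟩ := h
  exact Function.iterate_fixed T.parent_root n

theorem eq_root_of_parent (h : T.Anc x (T.parent x)) : x = T.root := by
  obtain ⟨n, hn⟩ := h
  obtain ⟨m, hm⟩ := T.reaches_root x
  have periodic : T.parent^[(n + 1) * m] x = x :=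
    Function.IsPeriodicPt.mul_const (show Function.IsPeriodicPt T.parent (n + 1) x from hn) m
  rw [add_one_mul, Function.iterate_add_apply, hm] at periodic
  exact periodic.symm.trans (Function.iterate_fixed T.parent_root _)

theorem eq_of_sibling (h : T.Anc x y) (hx : x ≠ T.root) (hxy : T.parent x = T.parent y) :
    x = y :=
  h.eq_or_parent.resolve_right fun h' => hx (eq_root_of_parent (hxy ▸ h'))

theorem exists_child (h : T.Anc x y) (hne : x ≠ y) :
    ∃ c, c ≠ T.root ∧ T.parent c = x ∧ T.Anc c y := by
  induction y using T.induction_on with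
  | root => exact absurd h.eq_root hne
  | child y hy ih =>
    rcases eq_or_ne x (T.parent y) with rfl | hxy
    · exact ⟨y, hy, rfl, refl T y⟩
    · obtain ⟨c, hc, hcx, hcy⟩ := ih (h.eq_or_parent.resolve_left hne) hxy
      exact ⟨c, hc, hcx, hcy.trans (parent T y)⟩

end Anc

theorem parent_ne_self (hx : x ≠ T.root) : T.parent x ≠ x :=
  fun h => hx (Anc.eq_root_of_parent (h.symm ▸ Anc.refl T x))

end ParentTree

namespace ParentProperty

variable {G : FlowGraph V} {T : ParentTree V} {S : Set V} {d v w x : V}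

theorem reachesIn_inter_descendants (hpp : ParentProperty G T) (hroot : T.root = G.s)
    (h : ReachesIn G.A S G.s x) (hdx : T.Anc d x) :
    ReachesIn G.A (S ∩ {y | T.Anc d y}) d x := by
  induction h with
  | refl hs =>
    obtain rfl : d = G.s := hroot ▸ (hroot.symm ▸ hdx).eq_root
    exact .refl ⟨hs, hdx⟩
  | @tail x y _ hA hy ih =>
    rcases hdx.eq_or_parent with rfl | hdy
    · exact .refl ⟨hy, hdx⟩
    · exact .tail (ih (hdy.trans (hpp x y hA))) hA ⟨hy, hdx⟩

theorem reachesIn_descendants (hpp : ParentProperty G T) (hroot : T.root = G.s)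
    (hdx : T.Anc d x) : ReachesIn G.A {y | T.Anc d y} d x :=
  (hpp.reachesIn_inter_descendants hroot (G.reachesIn_univ x) hdx).mono Set.inter_subset_right

theorem dom_of_anc (hpp : ParentProperty G T) (hroot : T.root = G.s) (hdx : T.Anc d x) :
    G.Dom d x :=
  domOn_iff_not_reachesIn_compl.2 fun h =>
    (hpp.reachesIn_inter_descendants hroot h hdx).source_mem.1 rfl

theorem dom_of_dom_descendant (hpp : ParentProperty G T) (hroot : T.root = G.s)
    (hdx : T.Anc d x) (hdv : ¬ T.Anc d v) (hvx : G.Dom v x) : G.Dom v d := by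
  rw [FlowGraph.Dom, domOn_iff_not_reachesIn_compl] at *
  have avoids_v : ReachesIn G.A {v}ᶜ d x :=
    (hpp.reachesIn_descendants hroot hdx).mono fun y hy hyv =>
      hdv (Set.mem_singleton_iff.1 hyv ▸ hy)
  exact fun h => hvx (h.trans avoids_v)

theorem not_dom_parent (hpp : ParentProperty G T) (hroot : T.root = G.s) (hv : v ≠ T.root) :
    ¬ G.Dom v (T.parent v) := fun h =>
  T.parent_ne_self hv (h.antisymm (hpp.dom_of_anc hroot (.parent T v))).symm

theorem anc_of_dom (hpp : ParentProperty G T) (hroot : T.root = G.s) (hsib : SiblingProperty G T)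
    (h : G.Dom v w) : T.Anc v w := by
  induction v using T.induction_on with
  | root => exact T.reaches_root w
  | child v hv ih =>
    have hpv : G.Dom (T.parent v) v := hpp.dom_of_anc hroot (.parent T v)
    rcases eq_or_ne (T.parent v) w with rfl | hne
    · exact absurd h (hpp.not_dom_parent hroot hv)
    · obtain ⟨c, hc, hcv, hcw⟩ := (ih (hpv.trans h)).exists_child hne
      rcases eq_or_ne v c with rfl | hvc
      · exact hcw
      · have hcv' : ¬ T.Anc c v := fun hcv' => hvc (hcv'.eq_of_sibling hc hcv).symm
        exact absurd (hpp.dom_of_dom_descendant hroot hcw hcv' h) (hsib v c hv hc hvc hcv.symm)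

theorem isDomTree (hpp : ParentProperty G T) (hroot : T.root = G.s)
    (hsib : SiblingProperty G T) : IsDomTree G T := by
  refine ⟨hroot, fun v hv => ⟨hpp.dom_of_anc hroot (.parent T v),
    T.parent_ne_self (hroot.symm ▸ hv), fun u hu hne => hpp.dom_of_anc hroot ?_⟩⟩
  exact (hpp.anc_of_dom hroot hsib hu).eq_or_parent.resolve_left hne

end ParentProperty

section DominatedSiblings

variable {G : FlowGraph V} {T : ParentTree V} {a v w : V}

/-- The siblings of `v` in `T`, other than `v` itself, that `v` dominates in `G`; these are the
violations of the sibling property at `v`. The root is excluded because it is its own parent. -/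
def dominatedSiblings (G : FlowGraph V) (T : ParentTree V) (v : V) : Set V :=
  {w | w ≠ T.root ∧ w ≠ v ∧ T.parent w = T.parent v ∧ G.Dom v w}

theorem siblingProperty_iff_dominatedSiblings_eq_empty :
    SiblingProperty G T ↔ ∀ v, v ≠ T.root → dominatedSiblings G T v = ∅ := by
  simp only [Set.eq_empty_iff_forall_notMem]
  exact ⟨fun h v hv w hw => h v w hv hw.1 hw.2.1.symm hw.2.2.1.symm hw.2.2.2,
    fun h v w hv hw hne hvw hdom => h v hv w ⟨hw, hne.symm, hvw.symm, hdom⟩⟩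

theorem not_arc_parent_of_mem_dominatedSiblings (hpp : ParentProperty G T) (hroot : T.root = G.s)
    (hv : v ≠ T.root) (hw : w ∈ dominatedSiblings G T v) : ¬ G.A (T.parent w) w := by
  obtain ⟨-, hwv, hsib, hdom⟩ := hw
  intro hA
  exact hpp.not_dom_parent hroot hv (hsib ▸ DomOn.of_arc hdom hwv hA)

theorem DerivedArc.mem_dominatedSiblings (hpp : ParentProperty G T) (hroot : T.root = G.s)
    (hv : v ≠ T.root) (hw : w ∈ dominatedSiblings G T v) (ha : DerivedArc G T a w) (hav : a ≠ v) :
    a ∈ dominatedSiblings G T v ∧ a ≠ w ∧ ReachesIn G.A {x | T.Anc a x ∨ T.Anc w x} a w := by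
  obtain ⟨x, hA, hwx, ⟨rfl, -⟩ | ⟨-, har, hsib, hax⟩⟩ := ha
  · exact absurd hA (not_arc_parent_of_mem_dominatedSiblings hpp hroot hv hw)
  have reaches_w : ReachesIn G.A {x | T.Anc a x ∨ T.Anc w x} a w :=
    .tail ((hpp.reachesIn_descendants hroot hax).mono fun _ => .inl) hA (.inr (.refl T w))
  obtain ⟨-, hwv, hsib', hdom⟩ := hw
  have hav' : ¬ T.Anc a v := fun h => hav (h.eq_of_sibling har (hsib.trans hsib'))
  have dom_a : G.Dom v a :=
    hpp.dom_of_dom_descendant hroot hax hav' (DomOn.of_arc hdom hwv hA)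
  exact ⟨⟨har, hav, hsib.trans hsib', dom_a⟩, fun h => hwx (h ▸ hax), reaches_w⟩

theorem exists_reachesIn_of_mem_dominatedSiblings (hpp : ParentProperty G T)
    (hroot : T.root = G.s) (hv : v ≠ T.root) (hw : w ∈ dominatedSiblings G T v)
    (h : G.A (T.parent w) w ∨
      ∃ a₁ a₂ : V, a₁ ≠ a₂ ∧ DerivedArc G T a₁ w ∧ DerivedArc G T a₂ w) :
    ∃ a ∈ dominatedSiblings G T v, a ≠ w ∧
      ReachesIn G.A {x | ∃ d ∈ dominatedSiblings G T v, T.Anc d x} a w := by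
  obtain ⟨a, hav, ha⟩ : ∃ a, a ≠ v ∧ DerivedArc G T a w := by
    obtain ⟨a₁, a₂, hne, h₁, h₂⟩ :=
      h.resolve_left (not_arc_parent_of_mem_dominatedSiblings hpp hroot hv hw)
    rcases eq_or_ne a₁ v with rfl | ha₁
    · exact ⟨a₂, hne.symm, h₂⟩
    · exact ⟨a₁, ha₁, h₁⟩
  obtain ⟨haD, haw, hreach⟩ := ha.mem_dominatedSiblings hpp hroot hv hw hav
  exact ⟨a, haD, haw, hreach.mono fun x hx => hx.elim (⟨a, haD, ·⟩) (⟨w, hw, ·⟩)⟩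

theorem exists_mem_dominatedSiblings_nonempty (hred : Reducible G) (hpp : ParentProperty G T)
    (hroot : T.root = G.s) (hv : v ≠ T.root) (hfin : (dominatedSiblings G T v).Finite)
    (hne : (dominatedSiblings G T v).Nonempty)
    (h : ∀ w ∈ dominatedSiblings G T v, G.A (T.parent w) w ∨
      ∃ a₁ a₂ : V, a₁ ≠ a₂ ∧ DerivedArc G T a₁ w ∧ DerivedArc G T a₂ w) :
    ∃ d ∈ dominatedSiblings G T v, (dominatedSiblings G T d).Nonempty := by
  set D := dominatedSiblings G T v
  set U := {x | ∃ d ∈ D, T.Anc d x}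
  obtain ⟨w, hw, hmin⟩ : ∃ w ∈ D, ∀ a ∈ D, ReachesIn G.A U a w → ReachesIn G.A U w a :=
    @Set.Finite.exists_minimal V ⟨ReachesIn G.A U⟩ ⟨fun _ _ _ h h' => ReachesIn.trans h' h⟩
      D hfin hne
  obtain ⟨a, ha, haw, hreach⟩ :=
    exists_reachesIn_of_mem_dominatedSiblings hpp hroot hv hw (h w hw)
  obtain ⟨e, ⟨d, hd, hde⟩, hea, hew⟩ := hred.exists_common_dominator hreach (hmin a ha hreach)
  have mem_of_dom {b : V} (hb : b ∈ D) (hbd : b ≠ d) (heb : G.Dom e b) :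
      b ∈ dominatedSiblings G T d :=
    ⟨hb.1, hbd, hb.2.2.1.trans hd.2.2.1.symm, (hpp.dom_of_anc hroot hde).trans heb⟩
  rcases eq_or_ne a d with rfl | had
  · exact ⟨a, hd, w, mem_of_dom hw haw.symm hew⟩
  · exact ⟨d, hd, a, mem_of_dom ha had hea⟩

theorem siblingProperty_of_reducible (hred : Reducible G) (hpp : ParentProperty G T)
    (hroot : T.root = G.s) (hfin : ∀ p, (T.parent ⁻¹' {p}).Finite)
    (h : ∀ v : V, v ≠ G.s → G.A (T.parent v) v ∨
      ∃ a₁ a₂ : V, a₁ ≠ a₂ ∧ DerivedArc G T a₁ v ∧ DerivedArc G T a₂ v) :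
    SiblingProperty G T := by
  rw [siblingProperty_iff_dominatedSiblings_eq_empty]
  intro u hu
  by_contra hne
  set B := {v | v ≠ T.root ∧ T.parent v = T.parent u ∧ (dominatedSiblings G T v).Nonempty}
  have hB : B.Finite := (hfin (T.parent u)).subset fun v hv => hv.2.1
  obtain ⟨v, ⟨hv, hvu, hvD⟩, hmax⟩ : ∃ v ∈ B, ∀ d ∈ B, G.Dom v d → G.Dom d v :=
    @Set.Finite.exists_maximal V ⟨G.Dom⟩ ⟨fun _ _ _ => DomOn.trans⟩ B hB
      ⟨u, hu, rfl, Set.nonempty_iff_ne_empty.2 hne⟩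
  have hD : (dominatedSiblings G T v).Finite :=
    (hfin (T.parent v)).subset fun w hw => hw.2.2.1
  obtain ⟨d, ⟨hd, hdv, hsib, hdom⟩, hdD⟩ :=
    exists_mem_dominatedSiblings_nonempty hred hpp hroot hv hD hvD
      fun w hw => h w (hroot ▸ hw.1)
  exact hdv ((hmax d ⟨hd, hsib.trans hvu, hdD⟩ hdom).antisymm hdom)

end DominatedSiblings

theorem stmt15_general (G : FlowGraph V) (hred : Reducible G) (T : ParentTree V)
    (hfin : ∀ p, (T.parent ⁻¹' {p}).Finite) (hroot : T.root = G.s) (hpp : ParentProperty G T)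
    (h : ∀ v : V, v ≠ G.s → G.A (T.parent v) v ∨
      ∃ a₁ a₂ : V, a₁ ≠ a₂ ∧ DerivedArc G T a₁ v ∧ DerivedArc G T a₂ v) :
    SiblingProperty G T ∧ IsDomTree G T := by
  have hsib : SiblingProperty G T := siblingProperty_of_reducible hred hpp hroot hfin h
  exact ⟨hsib, hpp.isDomTree hroot hsib⟩

/-- Suppose `G` is reducible and `T` has the parent property. If every vertex
`v ≠ s` satisfies `(t(v), v) ∈ A` or has at least two distinct entering arcs in
the derived graph, then `T` has the sibling property, and hence is the
dominator tree of `G`. -/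
theorem stmt15 [Fintype V] (G : FlowGraph V) (hred : Reducible G)
    (T : ParentTree V) (hroot : T.root = G.s) (hpp : ParentProperty G T)
    (h : ∀ v : V, v ≠ G.s → G.A (T.parent v) v ∨
      ∃ a₁ a₂ : V, a₁ ≠ a₂ ∧ DerivedArc G T a₁ v ∧ DerivedArc G T a₂ v) :
    SiblingProperty G T ∧ IsDomTree G T :=
  stmt15_general G hred T (fun _ => Set.toFinite _) hroot hpp h
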